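/- Let M = (Q, A, τ) be an invertible Mealy automaton. Then there exist elements y, z ∈ D'_M that freely generate a free subsemigroup of rank two if and only if there exists an element x ∈ D_M of infinite order. -/

import Mathlib

/-!
If `y, z ∈ D'_M` freely generate a free subsemigroup then `y` has infinite order, and so does any
preimage of `y` in `D_M`, because `~A` refines `~D`. The converse is the substantial direction.

Replacing the alphabet by its `ℓ`-th power, one may assume that the element of infinite order is the
class of a letter `a` (`Mealy.block`). The language `Lan(a)` of prefixes of the orbit of `a^ω` is
closed under factors, and, by invertibility, words of states act transitively on its words of any
given length (`Mealy.exists_actW_eq`). Hence the number of one-letter continuations of a word depends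
on its length only; as it cannot grow with the length, it is eventually a constant `d`
(`Mealy.exists_degree`), and then the continuations of a word depend only on its last `N` letters
(`Mealy.append_mem_Lan_of_suffix`).

Call two words of `Lan(a)` similar when they are `~D`-equivalent and have the same continuations;
similarity is preserved by the action. Given `w p c ∈ Lan(a)`, a mate of `p` is a word `p'` of the same
length such that `w p' c'` is similar to `w p c` for some `c'` with `|c'| = |c|`. By transitivity the
number of mates depends only on the lengths of `w`, `p`, `c`. It grows with the past `w` and with the
future `c` and is multiplicative in `p`, so it equals `k ^ |p|` for a constant `k ≤ d` as soon as the
past and the future are long (`Mealy.exists_mates_const`, `Mealy.ncard_mates`).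

If `k = d`, then the words of `Lan(a)` of each length fall into boundedly many `~D`-classes. By the pigeonhole
principle two powers of `a` act alike on these classes, hence are `~D`-equivalent; then the orbit of
`a^ω` consists of sequences with a common preperiod and period, so it is finite, and a second use of
the pigeonhole principle gives two powers of `a` that are `~A`-equivalent, against the infinite order
of `a`. So `k < d` (`Mealy.mates_lt_degree`).

Now take a word `w` to which one can return from wherever it leads (`Mealy.exists_recurrent`). Among
the `d ^ L` continuations of `w` of length `L`, a fixed proportion ends at the same place, while the
words that are mates of a given `p` before some future of bounded length are `O(k ^ L)` in number.
For large `L` this leaves `p` and `q` ending at the same place and never mates of each other;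
completing both by the same return path gives two loops at `w`. Distinct words of equal length in
these loops are not `~D`-equivalent, since the first place where they differ would make `p` and `q`
mates (`Mealy.exists_loops`). Words `l`, `l'` of different lengths are reduced to this case by
comparing `l b l'` with `l' b l` (`Mealy.exists_free_words`).
-/

namespace AutGrp

/-- A Mealy automaton with state set `Q` and alphabet `A`:
`step q a = (q · a, q @ a)` (output letter, next state). -/
structure Mealy (Q A : Type*) where
  step : Q → A → A × Q

namespace Mealy

variable {Q A : Type*}

/-- The output letter `q · a`. -/
def o (M : Mealy Q A) (q : Q) (a : A) : A := (M.step q a).1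

/-- The next state `q @ a`. -/
def t (M : Mealy Q A) (q : Q) (a : A) : Q := (M.step q a).2

/-- Action of a single state on a word of letters: `q · w`. -/
def actA (M : Mealy Q A) : Q → List A → List A
  | _, [] => []
  | q, a :: w => M.o q a :: M.actA (M.t q a) w

/-- State reached from `q` after reading the word `w`: `q @ w`. -/
def stA (M : Mealy Q A) : Q → List A → Q
  | q, [] => q
  | q, a :: w => M.stA (M.t q a) w

/-- Action of a word of states on a word of letters: `s · u` (rightmost state acts first). -/
def actW (M : Mealy Q A) : List Q → List A → List A
  | [], u => u
  | q :: s, u => M.actA q (M.actW s u)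

/-- Word of states reached after reading `u`: `s @ u`. -/
def stW (M : Mealy Q A) : List Q → List A → List Q
  | [], _ => []
  | q :: s, u => M.stA q (M.actW s u) :: M.stW s u

/-- `M` is invertible if each state acts on `A` by a bijection. -/
def Invertible (M : Mealy Q A) : Prop := ∀ q : Q, Function.Bijective (M.o q)

/-- `M` is reversible if each letter acts on `Q` by a bijection. -/
def Reversible (M : Mealy Q A) : Prop := ∀ a : A, Function.Bijective (fun q => M.t q a)

theorem actA_append (M : Mealy Q A) (q : Q) (x y : List A) :
    M.actA q (x ++ y) = M.actA q x ++ M.actA (M.stA q x) y := by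
  induction x generalizing q with
  | nil => simp [actA, stA]
  | cons a w ih => simp [actA, stA, ih]

theorem stA_append (M : Mealy Q A) (q : Q) (x y : List A) :
    M.stA q (x ++ y) = M.stA (M.stA q x) y := by
  induction x generalizing q with
  | nil => simp [stA]
  | cons a w ih => simp [stA, ih]

theorem actW_append_states (M : Mealy Q A) (s u : List Q) (w : List A) :
    M.actW (s ++ u) w = M.actW s (M.actW u w) := by
  induction s with
  | nil => simp [actW]
  | cons q s ih => simp [actW, ih]

theorem actW_append (M : Mealy Q A) (s : List Q) (x y : List A) :
    M.actW s (x ++ y) = M.actW s x ++ M.actW (M.stW s x) y := by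
  induction s with
  | nil => simp [actW, stW]
  | cons q s ih => simp [actW, stW, ih, actA_append]

theorem stW_append (M : Mealy Q A) (s : List Q) (x y : List A) :
    M.stW s (x ++ y) = M.stW (M.stW s x) y := by
  induction s with
  | nil => simp [stW]
  | cons q s ih => simp [stW, actW, ih, actW_append, stA_append]

theorem actW_stW_congr (M : Mealy Q A) {p p' : List Q}
    (h : ∀ w : List A, M.actW p w = M.actW p' w) (u w : List A) :
    M.actW (M.stW p u) w = M.actW (M.stW p' u) w := by
  have h1 := M.actW_append p u w
  have h2 := M.actW_append p' u w
  rw [h u, h (u ++ w)] at h1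
  rw [h1] at h2
  exact List.append_cancel_left h2

/-- The congruence `~Q` on the free monoid `Q*`: two words of states are equivalent
iff they act identically on `A*`. -/
def conQ (M : Mealy Q A) : Con (FreeMonoid Q) where
  r s u := ∀ w : List A, M.actW s.toList w = M.actW u.toList w
  iseqv := ⟨fun _ _ => rfl, fun h w => (h w).symm, fun h1 h2 w => (h1 w).trans (h2 w)⟩
  mul' := by
    intro a b c d h1 h2 w
    simp only [FreeMonoid.toList_mul, actW_append_states]
    rw [h2 w, h1 (M.actW d.toList w)]

/-- The congruence `~A` on the free monoid `A*`: `u ~A v` iff `s @ u = s @ v` for all `s ∈ Q*`. -/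
def conA (M : Mealy Q A) : Con (FreeMonoid A) where
  r u v := ∀ s : List Q, M.stW s u.toList = M.stW s v.toList
  iseqv := ⟨fun _ _ => rfl, fun h s => (h s).symm, fun h1 h2 s => (h1 s).trans (h2 s)⟩
  mul' := by
    intro a b c d h1 h2 s
    simp only [FreeMonoid.toList_mul, stW_append]
    rw [h1 s, h2 (M.stW s b.toList)]

/-- The congruence `~D` on the free monoid `A*`: `u ~D v` iff `s @ u ~Q s @ v` for all `s ∈ Q*`. -/
def conD (M : Mealy Q A) : Con (FreeMonoid A) where
  r u v := ∀ (s : List Q) (w : List A),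
    M.actW (M.stW s u.toList) w = M.actW (M.stW s v.toList) w
  iseqv := ⟨fun _ _ _ => rfl, fun h s w => (h s w).symm,
    fun h1 h2 s w => (h1 s w).trans (h2 s w)⟩
  mul' := by
    intro a b c d h1 h2 s w
    simp only [FreeMonoid.toList_mul, stW_append]
    calc M.actW (M.stW (M.stW s a.toList) c.toList) w
        = M.actW (M.stW (M.stW s b.toList) c.toList) w :=
          M.actW_stW_congr (h1 s) c.toList w
      _ = M.actW (M.stW (M.stW s b.toList) d.toList) w := h2 _ w

/-- The automaton semigroup (monoid) `P_M = Q* / ~Q`. -/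
abbrev PM (M : Mealy Q A) : Type _ := M.conQ.Quotient

/-- The dual automaton semigroup (monoid) `D_M = A* / ~A`. -/
abbrev DM (M : Mealy Q A) : Type _ := M.conA.Quotient

/-- The monoid `D'_M = A* / ~D`. -/
abbrev DM' (M : Mealy Q A) : Type _ := M.conD.Quotient

/-- The class in `P_M` of a word of states. -/
def PMmk (M : Mealy Q A) (s : List Q) : M.PM := M.conQ.mk' (FreeMonoid.ofList s)

/-- The class in `D_M` of a word of letters. -/
def DMmk (M : Mealy Q A) (u : List A) : M.DM := M.conA.mk' (FreeMonoid.ofList u)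

/-- The class in `D'_M` of a word of letters. -/
def DM'mk (M : Mealy Q A) (u : List A) : M.DM' := M.conD.mk' (FreeMonoid.ofList u)

/-- `M` is self-invertible if `P_M` is a group. -/
def SelfInvertible (M : Mealy Q A) : Prop :=
  ∀ x : M.PM, ∃ y : M.PM, x * y = 1 ∧ y * x = 1

/-- The enriched automaton of an invertible automaton: states `Q ⊕ Q`, where `Sum.inl q` is `q`
and `Sum.inr q` is the formal inverse `q⁻¹`; `τ̃(q,a) = τ(q,a)` and
`τ̃(q⁻¹, q·a) = (a, (q@a)⁻¹)`. -/
noncomputable def enriched [Nonempty A] (M : Mealy Q A) : Mealy (Q ⊕ Q) A where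
  step := fun p b =>
    match p with
    | Sum.inl q => (M.o q b, Sum.inl (M.t q b))
    | Sum.inr q =>
        (Function.invFun (M.o q) b, Sum.inr (M.t q (Function.invFun (M.o q) b)))

/-- The monoid `Δ_M` presented by generators `Q ⊔ A` and relations `q a = (q·a)(q@a)`. -/
def deltaCon (M : Mealy Q A) : Con (FreeMonoid (Q ⊕ A)) :=
  conGen (fun w₁ w₂ => ∃ (q : Q) (a : A),
    w₁ = FreeMonoid.of (Sum.inl q) * FreeMonoid.of (Sum.inr a) ∧
    w₂ = FreeMonoid.of (Sum.inr (M.o q a)) * FreeMonoid.of (Sum.inl (M.t q a)))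

end Mealy

/-- Evaluation of a positive word in the letters `y` (for `true`) and `z` (for `false`). -/
def evalPair {S : Type*} [Monoid S] (y z : S) : List Bool → S
  | [] => 1
  | b :: l => (bif b then y else z) * evalPair y z l

/-- `y` and `z` freely generate a free subsemigroup of rank two: distinct nonempty
positive words in `y, z` represent distinct elements. -/
def IsFreePair {S : Type*} [Monoid S] (y z : S) : Prop :=
  ∀ l₁ l₂ : List Bool, l₁ ≠ [] → l₂ ≠ [] →
    evalPair y z l₁ = evalPair y z l₂ → l₁ = l₂

/-- `x` has infinite order: `{x, x², x³, …}` is infinite. -/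
def InfiniteOrder {S : Type*} [Monoid S] (x : S) : Prop :=
  (Set.range fun n : ℕ => x ^ (n + 1)).Infinite

/-- The length-`n` prefix of a sequence. -/
def seqTake {A : Type*} (ξ : ℕ → A) (n : ℕ) : List A := (List.range n).map ξ

/-- The `n`-th power `u^n` of a finite word. -/
def wpow {A : Type*} (u : List A) : ℕ → List A
  | 0 => []
  | n + 1 => u ++ wpow u n

/-- The eventually periodic sequence `u v v v ⋯`. -/
noncomputable def prePeriodic {A : Type*} [Nonempty A] (u v : List A) : ℕ → A :=
  fun n => if n < u.length then u.getD n (Classical.arbitrary A)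
    else v.getD ((n - u.length) % v.length) (Classical.arbitrary A)

/-- The periodic sequence `u^ω = u u u ⋯`. -/
noncomputable def periodic {A : Type*} [Nonempty A] (u : List A) : ℕ → A :=
  prePeriodic [] u

namespace Mealy

/-- The action of a word of states on a sequence: `s · ξ` is the sequence whose
length-`n` prefix is `s · (length-`n` prefix of `ξ`)`. -/
noncomputable def actSeq {Q A : Type*} [Nonempty A] (M : Mealy Q A)
    (s : List Q) (ξ : ℕ → A) : ℕ → A :=
  fun n => (M.actW s (seqTake ξ (n + 1))).getD n (Classical.arbitrary A)

/-- The language of all prefixes of the orbit of `a^ω` under `P_M`. -/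
def Lan {Q A : Type*} (M : Mealy Q A) (a : A) : Set (List A) :=
  {v | ∃ (k : ℕ) (s : List Q), v = M.actW s (List.replicate k a)}

/-- The degree of `v` in `Lan(a)`: the number of letters `b` with `v b ∈ Lan(a)`. -/
noncomputable def deg {Q A : Type*} (M : Mealy Q A) (a : A) (v : List A) : ℕ :=
  {b : A | v ++ [b] ∈ M.Lan a}.ncard

end Mealy

/-- A language is regular if it is recognized by a deterministic finite automaton. -/
def IsRegular {A : Type*} (L : Set (List A)) : Prop :=
  ∃ (σ : Type) (_ : Fintype σ) (dfa : DFA A σ), ∀ w : List A, w ∈ dfa.accepts ↔ w ∈ L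

namespace Mealy

variable {Q A : Type*}

/-! ### The action and its inverses on words of fixed length -/

theorem length_actA (M : Mealy Q A) (q : Q) (u : List A) : (M.actA q u).length = u.length := by
  induction u generalizing q with
  | nil => rfl
  | cons a w ih => simp [actA, ih]

theorem length_actW (M : Mealy Q A) (s : List Q) (u : List A) :
    (M.actW s u).length = u.length := by
  induction s with
  | nil => rfl
  | cons q s ih => simp [actW, length_actA, ih]

theorem stW_append_states (M : Mealy Q A) (r s : List Q) (u : List A) :
    M.stW (r ++ s) u = M.stW r (M.actW s u) ++ M.stW s u := by
  induction r with
  | nil => simp [stW]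
  | cons q r ih => simp [stW, ih, actW_append_states]

theorem actA_injective {M : Mealy Q A} (hinv : M.Invertible) (q : Q) :
    Function.Injective (M.actA q) := by
  intro u
  induction u generalizing q with
  | nil =>
    intro v h
    cases v with
    | nil => rfl
    | cons b v => simp [actA] at h
  | cons a u ih =>
    intro v h
    cases v with
    | nil => simp [actA] at h
    | cons b v =>
      simp only [actA, List.cons.injEq] at h
      obtain rfl := (hinv q).1 h.1
      rw [ih _ h.2]

theorem actA_surjective {M : Mealy Q A} (hinv : M.Invertible) (q : Q) :
    Function.Surjective (M.actA q) := by
  intro v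
  induction v generalizing q with
  | nil => exact ⟨[], rfl⟩
  | cons b v ih =>
    obtain ⟨a, rfl⟩ := (hinv q).2 b
    obtain ⟨u, hu⟩ := ih (M.t q a)
    exact ⟨a :: u, by simp [actA, hu]⟩

theorem actW_injective {M : Mealy Q A} (hinv : M.Invertible) (s : List Q) :
    Function.Injective (M.actW s) := by
  induction s with
  | nil => exact fun u v h => h
  | cons q s ih => exact fun u v h => ih (actA_injective hinv q h)

theorem actW_surjective {M : Mealy Q A} (hinv : M.Invertible) (s : List Q) :
    Function.Surjective (M.actW s) := by
  induction s with
  | nil => exact fun v => ⟨v, rfl⟩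
  | cons q s ih =>
    intro v
    obtain ⟨w, rfl⟩ := actA_surjective hinv q v
    obtain ⟨u, rfl⟩ := ih w
    exact ⟨u, rfl⟩

theorem actW_flatten_replicate (M : Mealy Q A) (s : List Q) (n : ℕ) (u : List A) :
    M.actW (List.replicate n s).flatten u = (M.actW s)^[n] u := by
  induction n with
  | zero => rfl
  | succ n ih =>
    rw [Function.iterate_succ_apply', ← ih, List.replicate_succ, List.flatten_cons,
      actW_append_states]

/-- Since the letters act by permutations and there are finitely many words of length `k`, the
inverse of a word of states is realised, on words of length `k`, by another positive word. -/
theorem exists_inverse [Fintype A] {M : Mealy Q A} (hinv : M.Invertible) (s : List Q) (k : ℕ) :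
    ∃ r : List Q, ∀ u : List A, u.length = k → M.actW r (M.actW s u) = u := by
  let f : List.Vector A k → List.Vector A k :=
    fun u => ⟨M.actW s u.1, by rw [length_actW]; exact u.2⟩
  have hf : Function.Injective f := fun u v h =>
    Subtype.ext (actW_injective hinv s (congrArg Subtype.val h))
  have hper := (Finite.injective_iff_bijective.1 hf)
  let e := Equiv.ofBijective f hper
  have hpos : 0 < orderOf e := orderOf_pos e
  refine ⟨(List.replicate (orderOf e - 1) s).flatten, fun u hu => ?_⟩
  rw [actW_flatten_replicate, ← Function.iterate_succ_apply, Nat.succ_eq_add_one,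
    Nat.sub_add_cancel hpos]
  have key : ∀ n : ℕ, (M.actW s)^[n] u = ((e ^ n) ⟨u, hu⟩).1 := by
    intro n
    induction n with
    | zero => rfl
    | succ n ih =>
      rw [Function.iterate_succ_apply', ih, pow_succ']
      rfl
  rw [key, pow_orderOf_eq_one]
  rfl

/-! ### The language of prefixes of the orbit of `a^ω` -/

theorem replicate_mem_Lan (M : Mealy Q A) (a : A) (n : ℕ) : List.replicate n a ∈ M.Lan a :=
  ⟨n, [], rfl⟩

theorem actW_mem_Lan {M : Mealy Q A} {a : A} (s : List Q) {v : List A} (hv : v ∈ M.Lan a) :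
    M.actW s v ∈ M.Lan a := by
  obtain ⟨k, r, rfl⟩ := hv
  exact ⟨k, s ++ r, by rw [actW_append_states]⟩

theorem append_mem_Lan {M : Mealy Q A} {a : A} {u z : List A} (h : u ++ z ∈ M.Lan a) :
    u ∈ M.Lan a ∧ z ∈ M.Lan a := by
  obtain ⟨k, s, h⟩ := h
  have hk : k = u.length + z.length := by
    have := congrArg List.length h
    simpa [length_actW] using this.symm
  rw [hk, List.replicate_add, actW_append] at h
  obtain ⟨h1, h2⟩ := List.append_inj h (by simp [length_actW])
  exact ⟨⟨_, _, h1⟩, ⟨_, _, h2⟩⟩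

theorem actW_mem_Lan_iff [Fintype A] {M : Mealy Q A} (hinv : M.Invertible) {a : A} (s : List Q)
    {v : List A} : M.actW s v ∈ M.Lan a ↔ v ∈ M.Lan a := by
  refine ⟨fun h => ?_, actW_mem_Lan s⟩
  obtain ⟨r, hr⟩ := exists_inverse hinv s v.length
  have := actW_mem_Lan r h
  rwa [hr v rfl] at this

/-- Words of states act transitively on each level of the language. -/
theorem exists_actW_eq [Fintype A] {M : Mealy Q A} (hinv : M.Invertible) {a : A} {u v : List A}
    (hu : u ∈ M.Lan a) (hv : v ∈ M.Lan a) (huv : u.length = v.length) :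
    ∃ s : List Q, M.actW s u = v := by
  obtain ⟨k, s, rfl⟩ := hu
  obtain ⟨l, t, rfl⟩ := hv
  simp only [length_actW, List.length_replicate] at huv
  subst huv
  obtain ⟨r, hr⟩ := exists_inverse hinv s k
  exact ⟨t ++ r, by rw [actW_append_states, hr _ (by simp)]⟩

/-! ### Continuations and the degree -/

/-- The words of length `L` that continue `v` inside the language of `a`. -/
def ext (M : Mealy Q A) (a : A) (v : List A) (L : ℕ) : Set (List A) :=
  {z | z.length = L ∧ v ++ z ∈ M.Lan a}

theorem finite_of_length [Finite A] {S : Set (List A)} {L : ℕ} (h : ∀ z ∈ S, z.length = L) :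
    S.Finite :=
  (List.finite_length_eq A L).subset h

theorem ncard_le_of_length [Fintype A] {S : Set (List A)} {L : ℕ}
    (h : ∀ z ∈ S, z.length = L) : S.ncard ≤ Fintype.card A ^ L := by
  have h1 : S.ncard ≤ {z : List A | z.length = L}.ncard :=
    Set.ncard_le_ncard h (List.finite_length_eq A L)
  have h2 : {z : List A | z.length = L}.ncard = Fintype.card A ^ L := by
    rw [← card_vector, ← Nat.card_eq_fintype_card]
    rfl
  omega

theorem ext_finite [Finite A] (M : Mealy Q A) (a : A) (v : List A) (L : ℕ) :
    (M.ext a v L).Finite := finite_of_length (L := L) fun _ h => h.1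

/-- Counting words by their prefix of length `j`, when every such prefix has the same number `m`
of completions. -/
theorem ncard_eq_mul [Finite A] {S H : Set (List A)} {j l m : ℕ}
    (hS : ∀ x ∈ S, x.length = l) (hH : ∀ h ∈ H, h.length = j)
    (hsplit : ∀ x ∈ S, ∃ h t, h ∈ H ∧ x = h ++ t)
    (hm : ∀ h ∈ H, {t | h ++ t ∈ S}.ncard = m) : S.ncard = H.ncard * m := by
  classical
  have fS := finite_of_length hS
  have fH := finite_of_length hH
  rw [Set.ncard_eq_toFinset_card S fS, Set.ncard_eq_toFinset_card H fH]
  rw [Finset.card_eq_sum_card_fiberwise (f := List.take j) (t := fH.toFinset)]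
  · rw [Finset.sum_const_nat]
    intro h hh
    have hh' : h ∈ H := by simpa using hh
    rw [← hm h hh', ← Set.ncard_coe_finset,
      ← Set.ncard_image_of_injective {t | h ++ t ∈ S} (List.append_right_injective h)]
    congr 1
    ext x
    simp only [Finset.coe_filter, Set.Finite.mem_toFinset, Set.mem_ofPred_eq, Set.mem_image]
    constructor
    · rintro ⟨hx, hxh⟩
      exact ⟨x.drop j, by rw [← hxh, List.take_append_drop]; exact hx,
        by rw [← hxh, List.take_append_drop]⟩
    · rintro ⟨t, ht, rfl⟩
      exact ⟨ht, by rw [List.take_left' (hH h hh')]⟩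
  · intro x hx
    obtain ⟨h, t, hh, rfl⟩ := hsplit x (by simpa using hx)
    simpa [List.take_left' (hH h hh)] using hh

theorem ncard_ext_le_actW {M : Mealy Q A} [Fintype A] (hinv : M.Invertible) {a : A} (s : List Q)
    (v : List A) (L : ℕ) : (M.ext a v L).ncard ≤ (M.ext a (M.actW s v) L).ncard := by
  refine Set.ncard_le_ncard_of_injOn (M.actW (M.stW s v)) (fun z hz => ⟨?_, ?_⟩)
    ((actW_injective hinv _).injOn) (ext_finite ..)
  · rw [length_actW]; exact hz.1
  · rw [← actW_append]; exact actW_mem_Lan s hz.2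

theorem ncard_ext_eq {M : Mealy Q A} [Fintype A] (hinv : M.Invertible) {a : A}
    {u v : List A} (hu : u ∈ M.Lan a) (hv : v ∈ M.Lan a) (huv : u.length = v.length) (L : ℕ) :
    (M.ext a u L).ncard = (M.ext a v L).ncard := by
  obtain ⟨s, hs⟩ := exists_actW_eq hinv hu hv huv
  obtain ⟨t, ht⟩ := exists_actW_eq hinv hv hu huv.symm
  have h1 := ncard_ext_le_actW hinv (a := a) s u L
  have h2 := ncard_ext_le_actW hinv (a := a) t v L
  rw [hs] at h1
  rw [ht] at h2
  omega

theorem ext_append_subset (M : Mealy Q A) (a : A) (u v : List A) (L : ℕ) :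
    M.ext a (u ++ v) L ⊆ M.ext a v L := fun z hz =>
  ⟨hz.1, (append_mem_Lan (u := u) (by simpa using hz.2)).2⟩

/-- From some level `N` on, every word of the language has the same positive number `d` of one-letter
continuations: that number depends on the length only, and it decreases with the length because
the language is closed under suffixes. -/
theorem exists_degree [Fintype A] {M : Mealy Q A} (hinv : M.Invertible) (a : A) :
    ∃ N d : ℕ, 0 < d ∧ ∀ v ∈ M.Lan a, N ≤ v.length → (M.ext a v 1).ncard = d := by
  let f : ℕ → ℕ := fun n => (M.ext a (List.replicate n a) 1).ncard
  have hf : Antitone f := antitone_nat_of_succ_le fun n =>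
    Set.ncard_le_ncard (by
      rw [List.replicate_succ]
      exact ext_append_subset M a [a] _ 1) (ext_finite ..)
  obtain ⟨N, hN⟩ := WellFoundedLT.antitone_chain_condition hf
  refine ⟨N, f N, ?_, fun v hv hl => ?_⟩
  · rw [Set.ncard_pos (ext_finite ..)]
    refine ⟨[a], rfl, ?_⟩
    rw [← List.replicate_succ']
    exact replicate_mem_Lan M a _
  · rw [ncard_ext_eq hinv hv (replicate_mem_Lan M a v.length) (by simp)]
    exact (hN _ hl).symm

/-- Words of length at least `N` forget the past: which words may follow depends only on a suffix
of length `N`. -/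
theorem append_mem_Lan_of_suffix [Finite A] {M : Mealy Q A} {a : A} {N d : ℕ}
    (hd : ∀ v ∈ M.Lan a, N ≤ v.length → (M.ext a v 1).ncard = d) {u v z : List A}
    (hv : N ≤ v.length) (huv : u ++ v ∈ M.Lan a) (hvz : v ++ z ∈ M.Lan a) :
    u ++ v ++ z ∈ M.Lan a := by
  induction z using List.reverseRecOn with
  | nil => simpa using huv
  | append_singleton z b ih =>
    rw [← List.append_assoc] at hvz
    have h1 := ih (append_mem_Lan hvz).1
    have h2 := ext_append_subset M a u (v ++ z) 1
    have h3 : M.ext a (u ++ (v ++ z)) 1 = M.ext a (v ++ z) 1 := by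
      refine Set.eq_of_subset_of_ncard_le h2 ?_ (ext_finite ..)
      rw [hd _ (append_mem_Lan hvz).1 (by simp; omega),
        hd _ (by simpa using h1) (by simp; omega)]
    have h4 : [b] ∈ M.ext a (v ++ z) 1 := ⟨rfl, hvz⟩
    rw [← h3] at h4
    simpa using h4.2

theorem ncard_ext [Finite A] {M : Mealy Q A} {a : A} {N d : ℕ}
    (hd : ∀ v ∈ M.Lan a, N ≤ v.length → (M.ext a v 1).ncard = d) (L : ℕ) {v : List A}
    (hv : v ∈ M.Lan a) (hl : N ≤ v.length) : (M.ext a v L).ncard = d ^ L := by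
  induction L generalizing v with
  | zero =>
    rw [pow_zero, Set.ncard_eq_one]
    refine ⟨[], ?_⟩
    ext z
    constructor
    · exact fun h => List.length_eq_zero_iff.1 h.1
    · rintro rfl
      exact ⟨rfl, by simpa using hv⟩
  | succ L ih =>
    rw [pow_succ']
    nth_rw 1 [← hd v hv hl]
    refine ncard_eq_mul (j := 1) (l := L + 1) (fun x hx => hx.1) (fun h hh => hh.1) ?_ ?_
    · rintro (_ | ⟨b, t⟩) ⟨h1, h2⟩
      · simp at h1
      · exact ⟨[b], t, ⟨rfl, (append_mem_Lan (z := t) (by simpa using h2)).1⟩, rfl⟩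
    · rintro h ⟨h1, h2⟩
      rw [← ih h2 (by simp; omega)]
      congr 1
      ext t
      simp [ext, h1, add_comm L 1]

/-- Every word of the language extends to arbitrarily long ones. -/
theorem exists_ext [Fintype A] {M : Mealy Q A} (hinv : M.Invertible) {a : A} {v : List A}
    (hv : v ∈ M.Lan a) (L : ℕ) : ∃ z, z.length = L ∧ v ++ z ∈ M.Lan a := by
  obtain ⟨s, hs⟩ := exists_actW_eq hinv (replicate_mem_Lan M a v.length) hv (by simp)
  refine ⟨M.actW (M.stW s (List.replicate v.length a)) (List.replicate L a), ?_, ?_⟩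
  · simp [length_actW]
  · have := actW_mem_Lan s (replicate_mem_Lan M a (v.length + L))
    rwa [List.replicate_add, actW_append, hs] at this

end Mealy

namespace Mealy

variable {Q A : Type*}

/-! ### The congruence `~D` on the language, and its fibres -/

/-- The congruence `~D`, on lists. -/
def EqD (M : Mealy Q A) (u v : List A) : Prop :=
  ∀ (s : List Q) (w : List A), M.actW (M.stW s u) w = M.actW (M.stW s v) w

theorem EqD.symm {M : Mealy Q A} {u v : List A} (h : M.EqD u v) : M.EqD v u :=
  fun s w => (h s w).symm

theorem EqD.trans {M : Mealy Q A} {u v x : List A} (h : M.EqD u v) (h' : M.EqD v x) :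
    M.EqD u x :=
  fun s w => (h s w).trans (h' s w)

theorem EqD.append_left {M : Mealy Q A} {u v : List A} (h : M.EqD u v) (x : List A) :
    M.EqD (x ++ u) (x ++ v) := fun s w => by
  rw [stW_append, stW_append]; exact h _ w

theorem EqD.append_right {M : Mealy Q A} {u v : List A} (h : M.EqD u v) (x : List A) :
    M.EqD (u ++ x) (v ++ x) := fun s w => by
  rw [stW_append, stW_append]; exact M.actW_stW_congr (h s) x w

/-- `~D` is invariant under the action of words of states. This uses that words of states act
surjectively. -/
theorem EqD.actW {M : Mealy Q A} (hinv : M.Invertible) {u v : List A} (h : M.EqD u v)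
    (s : List Q) : M.EqD (M.actW s u) (M.actW s v) := by
  intro r w
  obtain ⟨x, rfl⟩ := actW_surjective hinv (M.stW s u) w
  have h1 := h (r ++ s) x
  rw [stW_append_states, stW_append_states, actW_append_states, actW_append_states] at h1
  rw [h1, h s x]

/-- `u` and `v` are `~D`-equivalent words of the language of `a` with the same continuations in it. -/
def Sim (M : Mealy Q A) (a : A) (u v : List A) : Prop :=
  M.EqD u v ∧ v ∈ M.Lan a ∧ ∀ z, u ++ z ∈ M.Lan a ↔ v ++ z ∈ M.Lan a

theorem Sim.left_mem {M : Mealy Q A} {a : A} {u v : List A} (h : M.Sim a u v) :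
    u ∈ M.Lan a := by
  have := (h.2.2 []).2 (by simpa using h.2.1)
  simpa using this

theorem Sim.refl {M : Mealy Q A} {a : A} {u : List A} (h : u ∈ M.Lan a) : M.Sim a u u :=
  ⟨fun _ _ => rfl, h, fun _ => Iff.rfl⟩

theorem Sim.symm {M : Mealy Q A} {a : A} {u v : List A} (h : M.Sim a u v) : M.Sim a v u :=
  ⟨h.1.symm, h.left_mem, fun z => (h.2.2 z).symm⟩

theorem Sim.trans {M : Mealy Q A} {a : A} {u v x : List A} (h : M.Sim a u v)
    (h' : M.Sim a v x) : M.Sim a u x :=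
  ⟨h.1.trans h'.1, h'.2.1, fun z => (h.2.2 z).trans (h'.2.2 z)⟩

theorem Sim.append_right {M : Mealy Q A} {a : A} {u v z : List A} (h : M.Sim a u v)
    (hz : v ++ z ∈ M.Lan a) : M.Sim a (u ++ z) (v ++ z) :=
  ⟨h.1.append_right z, hz, fun x => by
    rw [List.append_assoc, List.append_assoc]; exact h.2.2 _⟩

theorem Sim.append_left [Finite A] {M : Mealy Q A} {a : A} {N d : ℕ}
    (hd : ∀ v ∈ M.Lan a, N ≤ v.length → (M.ext a v 1).ncard = d) {y w x x' : List A}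
    (hw : N ≤ w.length) (h : M.Sim a (w ++ x) (w ++ x')) (hy : y ++ (w ++ x') ∈ M.Lan a) :
    M.Sim a (y ++ (w ++ x)) (y ++ (w ++ x')) := by
  have hyw : y ++ w ∈ M.Lan a := by
    rw [← List.append_assoc] at hy
    exact (append_mem_Lan hy).1
  have key : ∀ z, y ++ (w ++ z) ∈ M.Lan a ↔ w ++ z ∈ M.Lan a := fun z =>
    ⟨fun h => (append_mem_Lan h).2, fun h => by
      have := append_mem_Lan_of_suffix hd hw hyw h
      simpa using this⟩
  refine ⟨h.1.append_left y, hy, fun z => ?_⟩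
  have := h.2.2 z
  simp only [List.append_assoc] at this ⊢
  rw [key, key, this]

theorem Sim.actW [Fintype A] {M : Mealy Q A} (hinv : M.Invertible) {a : A} {u v : List A}
    (h : M.Sim a u v) (s : List Q) : M.Sim a (M.actW s u) (M.actW s v) := by
  refine ⟨h.1.actW hinv s, actW_mem_Lan s h.2.1, fun z => ?_⟩
  obtain ⟨x, rfl⟩ := actW_surjective hinv (M.stW s u) z
  rw [← actW_append, h.1 s x, ← actW_append, actW_mem_Lan_iff hinv, actW_mem_Lan_iff hinv]
  exact h.2.2 x

/-- The words `p'` which can replace `p` in `w p c`, up to `Sim`, at the cost of changing `c`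
to some word `c'` of the same length. -/
def mates (M : Mealy Q A) (a : A) (w p c : List A) : Set (List A) :=
  {p' | p'.length = p.length ∧
    ∃ c', c'.length = c.length ∧ M.Sim a (w ++ p' ++ c') (w ++ p ++ c)}

theorem mates_finite [Finite A] (M : Mealy Q A) (a : A) (w p c : List A) :
    (M.mates a w p c).Finite := finite_of_length fun _ h => h.1

theorem mates_subset_ext (M : Mealy Q A) (a : A) (w p c : List A) :
    M.mates a w p c ⊆ M.ext a w p.length := by
  rintro p' ⟨h, c', -, h'⟩
  exact ⟨h, (append_mem_Lan h'.left_mem).1⟩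

theorem mates_subset_right {M : Mealy Q A} {a : A} {w p c z : List A}
    (h : w ++ p ++ (c ++ z) ∈ M.Lan a) : M.mates a w p c ⊆ M.mates a w p (c ++ z) := by
  rintro p' ⟨hp, c', hc, h'⟩
  refine ⟨hp, c' ++ z, by simp [hc], ?_⟩
  rw [← List.append_assoc] at h ⊢
  rw [← List.append_assoc]
  exact h'.append_right h

theorem mates_subset_left [Finite A] {M : Mealy Q A} {a : A} {N d : ℕ}
    (hd : ∀ v ∈ M.Lan a, N ≤ v.length → (M.ext a v 1).ncard = d) {y w p c : List A}
    (hw : N ≤ w.length) (h : y ++ w ++ p ++ c ∈ M.Lan a) :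
    M.mates a w p c ⊆ M.mates a (y ++ w) p c := by
  rintro p' ⟨hp, c', hc, h'⟩
  refine ⟨hp, c', hc, ?_⟩
  simp only [List.append_assoc] at h h' ⊢
  exact h'.append_left hd hw h

theorem ncard_mates_le [Fintype A] {M : Mealy Q A} (hinv : M.Invertible) {a : A}
    (s : List Q) {w p c w₁ p₁ c₁ : List A} (h : M.actW s (w ++ p ++ c) = w₁ ++ p₁ ++ c₁)
    (hw : w.length = w₁.length) (hp : p.length = p₁.length) :
    (M.mates a w p c).ncard ≤ (M.mates a w₁ p₁ c₁).ncard := by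
  have hl := congrArg List.length h
  simp only [length_actW, List.length_append] at hl
  have hw1 : M.actW s w = w₁ := by
    simp only [List.append_assoc, actW_append] at h
    exact (List.append_inj h (by simp [length_actW, hw])).1
  refine Set.ncard_le_ncard_of_injOn (M.actW (M.stW s w)) ?_
    ((actW_injective hinv _).injOn) (mates_finite ..)
  rintro p' ⟨hp', c', hc', h'⟩
  refine ⟨by rw [length_actW]; omega, M.actW (M.stW s (w ++ p')) c',
    by rw [length_actW]; omega, ?_⟩
  have h2 := h'.actW hinv s
  rw [h, actW_append, actW_append, hw1] at h2
  exact h2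

theorem ncard_mates_eq [Fintype A] {M : Mealy Q A} (hinv : M.Invertible) {a : A}
    {w p c w₁ p₁ c₁ : List A} (h : w ++ p ++ c ∈ M.Lan a) (h₁ : w₁ ++ p₁ ++ c₁ ∈ M.Lan a)
    (hw : w.length = w₁.length) (hp : p.length = p₁.length) (hc : c.length = c₁.length) :
    (M.mates a w p c).ncard = (M.mates a w₁ p₁ c₁).ncard := by
  obtain ⟨s, hs⟩ := exists_actW_eq hinv h h₁ (by simp [hw, hp, hc])
  obtain ⟨t, ht⟩ := exists_actW_eq hinv h₁ h (by simp [hw, hp, hc])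
  exact le_antisymm (ncard_mates_le hinv s hs hw hp)
    (ncard_mates_le hinv t ht hw.symm hp.symm)

/-- The number of mates of a letter stabilises once both the past and the future are long: it grows
with either of them and is bounded by the degree. -/
theorem exists_mates_const [Fintype A] {M : Mealy Q A} (hinv : M.Invertible) {a : A} {N d : ℕ}
    (hd : ∀ v ∈ M.Lan a, N ≤ v.length → (M.ext a v 1).ncard = d) :
    ∃ I n k : ℕ, N ≤ I ∧ 0 < k ∧ k ≤ d ∧ ∀ w p c : List A, w ++ p ++ c ∈ M.Lan a →
      p.length = 1 → I ≤ w.length → n ≤ c.length → (M.mates a w p c).ncard = k := by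
  let R : ℕ → List A := fun n => List.replicate n a
  have hR : ∀ i j, R i ++ [a] ++ R j ∈ M.Lan a := fun i j => by
    have := replicate_mem_Lan M a (i + 1 + j)
    rwa [List.replicate_add, List.replicate_add] at this
  let f : ℕ → ℕ → ℕ := fun i n => (M.mates a (R i) [a] (R n)).ncard
  have hf : ∀ {i i' n n'}, N ≤ i → i ≤ i' → n ≤ n' → f i n ≤ f i' n' := by
    intro i i' n n' hN hi hn
    obtain ⟨j, rfl⟩ := Nat.exists_eq_add_of_le' hi
    obtain ⟨m, rfl⟩ := Nat.exists_eq_add_of_le hn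
    refine Set.ncard_le_ncard ?_ (mates_finite ..)
    have e1 : R (j + i) = R j ++ R i := List.replicate_add ..
    have e2 : R (n + m) = R n ++ R m := List.replicate_add ..
    rw [e1, e2]
    refine (mates_subset_left hd (y := R j) (by simpa [R] using hN) ?_).trans
      (mates_subset_right ?_)
    · rw [← e1]; exact hR _ _
    · rw [← e1, ← e2]; exact hR _ _
  have hle : ∀ i n, N ≤ i → f i n ≤ d := by
    intro i n hi
    rw [← hd (R i) (replicate_mem_Lan M a i) (by simpa [R] using hi)]
    exact Set.ncard_le_ncard (mates_subset_ext M a (R i) [a] (R n)) (ext_finite ..)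
  let S : Set ℕ := {k | ∃ i n, N ≤ i ∧ f i n = k}
  have hS : BddAbove S := ⟨d, by rintro _ ⟨i, n, hi, rfl⟩; exact hle i n hi⟩
  obtain ⟨I, n, hI, hk⟩ := Nat.sSup_mem (s := S) ⟨_, N, 0, le_rfl, rfl⟩ hS
  refine ⟨I, n, f I n, hI, ?_, hle I n hI, fun w p c hwpc hp hw hc => ?_⟩
  · rw [Set.ncard_pos (mates_finite ..)]
    exact ⟨[a], rfl, R n, rfl, Sim.refl (hR I n)⟩
  · rw [ncard_mates_eq hinv hwpc (hR w.length c.length) (by simp [R]) (by simp [hp])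
      (by simp [R])]
    refine le_antisymm ?_ (hf hI hw hc)
    rw [hk]
    exact le_csSup hS ⟨_, _, hI.trans hw, rfl⟩

theorem ncard_mates [Fintype A] {M : Mealy Q A} {a : A} {I n k : ℕ}
    (hk : ∀ w p c : List A, w ++ p ++ c ∈ M.Lan a →
      p.length = 1 → I ≤ w.length → n ≤ c.length → (M.mates a w p c).ncard = k)
    {w p c : List A} (h : w ++ p ++ c ∈ M.Lan a) (hw : I ≤ w.length) (hc : n ≤ c.length) :
    (M.mates a w p c).ncard = k ^ p.length := by
  obtain ⟨L, hL⟩ : ∃ L, p.length = L := ⟨_, rfl⟩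
  rw [hL]
  induction L generalizing w p c with
  | zero =>
    obtain rfl := List.length_eq_zero_iff.1 hL
    rw [pow_zero, Set.ncard_eq_one]
    refine ⟨[], ?_⟩
    ext z
    constructor
    · exact fun h => List.length_eq_zero_iff.1 h.1
    · rintro rfl
      exact ⟨rfl, c, rfl, Sim.refl h⟩
  | succ L ih =>
    obtain ⟨b, p, rfl⟩ := List.exists_cons_of_length_eq_add_one hL
    have hL : p.length = L := by simpa using hL
    have h' : w ++ [b] ++ (p ++ c) ∈ M.Lan a := by simpa using h
    rw [pow_succ']
    nth_rw 1 [← hk w [b] (p ++ c) h' rfl hw (by simp; omega)]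
    refine ncard_eq_mul (j := 1) (l := p.length + 1) (fun x hx => hx.1) (fun q hq => hq.1) ?_ ?_
    · rintro (_ | ⟨b', t⟩) ⟨h1, c', hc', h2⟩
      · simp at h1
      · simp only [List.length_cons, Nat.add_right_cancel_iff] at h1
        exact ⟨[b'], t, ⟨rfl, t ++ c', by simp [h1, hc'], by simpa using h2⟩, rfl⟩
    · rintro q ⟨hq, e, he, h2⟩
      obtain ⟨t₀, c₀, rfl, ht₀, hc₀⟩ : ∃ t₀ c₀, e = t₀ ++ c₀ ∧ t₀.length = p.length ∧
          c₀.length = c.length :=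
        ⟨e.take p.length, e.drop p.length, (List.take_append_drop ..).symm,
          by simp [he], by simp [he]⟩
      have h3 : M.Sim a (w ++ q ++ t₀ ++ c₀) (w ++ b :: p ++ c) := by simpa using h2
      rw [← ih h3.left_mem (by simp at hq ⊢; omega) (by omega) (by omega)]
      congr 1
      ext t
      constructor
      · rintro ⟨h4, c', hc', h5⟩
        refine ⟨by simp [hq] at h4; omega, c', by omega, ?_⟩
        exact Sim.trans (by simpa using h5) h3.symm
      · rintro ⟨h4, c', hc', h5⟩
        refine ⟨by simp at hq ⊢; omega, c', by omega, ?_⟩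
        simpa using h5.trans h3

end Mealy

namespace Mealy

variable {Q A : Type*}

/-! ### Infinite order forces unboundedly many `~D`-classes -/

/-- Suppose that the words of the language of lengths `g 0, g 1, …` fall into boundedly many classes
for the relation `π u = π v`, and that this relation is compatible with the action, the states reached
being compared through `lab`. Each level then carries a finite pointed automaton on at most
`|F|` points; two levels with the same automaton cannot be distinguished by `s ↦ s @ aⁿ`, up to
`lab`. -/
theorem exists_same_level {X Y F : Type*} [Finite Q] [Finite Y] [Finite F] (M : Mealy Q A) (a : A)
    (π : List A → X) (lab : Q → Y) (g : ℕ → ℕ)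
    (hπ : ∀ u v, π u = π v → ∀ q, π (M.actA q u) = π (M.actA q v) ∧
      lab (M.stA q u) = lab (M.stA q v))
    (hF : ∀ L, ∃ code : List A → F, ∀ u ∈ M.Lan a, ∀ v ∈ M.Lan a, u.length = g L →
      v.length = g L → code u = code v → π u = π v) :
    ∃ L L', L ≠ L' ∧ ∀ s, (M.stW s (List.replicate (g L) a)).map lab =
      (M.stW s (List.replicate (g L') a)).map lab := by
  classical
  choose code hcode using hF
  -- `cd L u` depends on the class of `u` only, unlike `code L u`.
  have hcd : ∀ L, ∃ cd : List A → F, (∀ u ∈ M.Lan a, ∀ v ∈ M.Lan a, u.length = g L →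
      v.length = g L → (cd u = cd v ↔ π u = π v)) := by
    intro L
    let P : X → Prop := fun x => ∃ u ∈ M.Lan a, u.length = g L ∧ π u = x
    let rep : X → List A := fun x => if h : P x then h.choose else []
    have hrep : ∀ u ∈ M.Lan a, u.length = g L →
        rep (π u) ∈ M.Lan a ∧ (rep (π u)).length = g L ∧ π (rep (π u)) = π u := by
      intro u hu hl
      have h : P (π u) := ⟨u, hu, hl, rfl⟩
      simp only [rep, dif_pos h]
      exact h.choose_spec
    refine ⟨fun u => code L (rep (π u)), fun u hu v hv hul hvl => ⟨fun h => ?_, fun h => ?_⟩⟩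
    · obtain ⟨h1, h2, h3⟩ := hrep u hu hul
      obtain ⟨h4, h5, h6⟩ := hrep v hv hvl
      rw [← h3, ← h6]
      exact hcode L _ h1 _ h4 h2 h5 h
    · simp only [h]
  choose cd hcd using hcd
  let P : ℕ → F → List A → Prop := fun L j v => v ∈ M.Lan a ∧ v.length = g L ∧ cd L v = j
  let T : ℕ → Q → F → Option (F × Y) := fun L q j =>
    if h : ∃ v, P L j v then some (cd L (M.actA q h.choose), lab (M.stA q h.choose)) else none
  have hT : ∀ L q v, v ∈ M.Lan a → v.length = g L →
      T L q (cd L v) = some (cd L (M.actA q v), lab (M.stA q v)) := by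
    intro L q v hv hl
    have h : ∃ v', P L (cd L v) v' := ⟨v, hv, hl, rfl⟩
    simp only [T, dif_pos h]
    obtain ⟨h1, h2, h3⟩ := h.choose_spec
    obtain ⟨h4, h5⟩ := hπ _ _ ((hcd L _ h1 _ hv h2 hl).1 h3) q
    have h7 : ∀ u : List A, u.length = g L → (M.actA q u).length = g L :=
      fun u hu => by rw [length_actA, hu]
    have h6 : cd L (M.actA q h.choose) = cd L (M.actA q v) :=
      (hcd L _ (actW_mem_Lan [q] h1 : M.actA q h.choose ∈ M.Lan a) _
        (actW_mem_Lan [q] hv : M.actA q v ∈ M.Lan a) (h7 _ h2) (h7 _ hl)).2 h4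
    rw [h5, h6]
  obtain ⟨L, L', hne, heq⟩ := Finite.exists_ne_map_eq_of_infinite
    (fun L => (T L, cd L (List.replicate (g L) a)))
  obtain ⟨h1, h2⟩ := Prod.mk.inj heq
  refine ⟨L, L', hne, fun s => ?_⟩
  suffices H : cd L (M.actW s (List.replicate (g L) a)) = cd L' (M.actW s (List.replicate (g L') a)) ∧
      (M.stW s (List.replicate (g L) a)).map lab = (M.stW s (List.replicate (g L') a)).map lab from
    H.2
  induction s with
  | nil => exact ⟨h2, rfl⟩
  | cons q s ih =>
    have e1 := hT L q _ (actW_mem_Lan s (replicate_mem_Lan M a (g L))) (by simp [length_actW])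
    have e2 := hT L' q _ (actW_mem_Lan s (replicate_mem_Lan M a (g L'))) (by simp [length_actW])
    rw [h1, ih.1, e2, Option.some.injEq, Prod.mk.injEq] at e1
    exact ⟨e1.1.symm, by simp only [stW, List.map_cons, ih.2, e1.2]⟩

/-- Words of length at most `n`. -/
abbrev Short (A : Type*) (n : ℕ) : Type _ := {l : List A // l.length ≤ n}

instance [Finite A] (n : ℕ) : Finite (Short A n) := (List.finite_length_le A n).to_subtype

/-- If two powers of `a` are `~D`-equivalent then so are two powers for `~A`: the images of `a^ω` are
all periodic from the same place on and with the same period, so there are finitely many of them. -/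
theorem exists_stW_eq_of_eqD [Finite Q] [Finite A] {M : Mealy Q A} {a : A} {n n' : ℕ}
    (hn : n < n') (h : M.EqD (List.replicate n a) (List.replicate n' a)) :
    ∃ i j, i ≠ j ∧ ∀ s, M.stW s (List.replicate i a) = M.stW s (List.replicate j a) := by
  have hpre : ∀ s t l m, l ≤ m →
      M.actW s (List.replicate m a) = M.actW t (List.replicate m a) →
      M.actW s (List.replicate l a) = M.actW t (List.replicate l a) := by
    intro s t l m hlm h
    obtain ⟨r, rfl⟩ := Nat.exists_eq_add_of_le hlm
    rw [List.replicate_add, actW_append, actW_append] at h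
    exact (List.append_inj h (by simp [length_actW])).1
  have hdet : ∀ s t, M.actW s (List.replicate n' a) = M.actW t (List.replicate n' a) →
      ∀ j, M.actW s (List.replicate (n' + j) a) = M.actW t (List.replicate (n' + j) a) := by
    intro s t hst j
    induction j with
    | zero => exact hst
    | succ j ih =>
      have h1 : M.EqD (List.replicate (n + j) a) (List.replicate (n' + j) a) := by
        rw [List.replicate_add, List.replicate_add]
        exact h.append_right _
      have h2 := hpre s t (n + j + 1) (n' + j) (by omega) ih
      rw [List.replicate_add _ 1, actW_append, actW_append] at h2
      have h3 := (List.append_inj h2 (by simp [length_actW])).2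
      rw [h1 s, h1 t] at h3
      rw [← add_assoc, List.replicate_add _ 1, actW_append, actW_append, ih, h3]
  obtain ⟨L, L', hne, hL⟩ := exists_same_level (F := Short A n') M a id id (fun L => n' + L)
    (fun u v huv q => by simp only [id] at huv; simp [huv]) (fun L =>
      ⟨fun v => ⟨v.take n', by simp⟩, by
        rintro _ ⟨k, s, rfl⟩ _ ⟨k', t, rfl⟩ hk hk' hc
        simp only [length_actW, List.length_replicate] at hk hk'
        subst hk hk'
        simp only [Subtype.mk.injEq] at hc
        apply hdet
        rw [List.replicate_add, actW_append, actW_append, List.take_left' (by simp [length_actW]),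
          List.take_left' (by simp [length_actW])] at hc
        exact hc⟩)
  exact ⟨n' + L, n' + L', by omega, by simpa using hL⟩

/-- If the words of `Lan(a)` of each length fall into boundedly many `~D`-classes, encoded in `F`, then two
different powers of `a` are `~D`-equivalent. -/
theorem exists_eqD_of_bounded {F : Type*} [Finite Q] [Finite F] {M : Mealy Q A}
    (hinv : M.Invertible) {a : A} (m : ℕ)
    (hF : ∀ L, ∃ code : List A → F, ∀ u ∈ M.Lan a, ∀ v ∈ M.Lan a, u.length = m + L →
      v.length = m + L → code u = code v → M.EqD u v) :
    ∃ i j, i < j ∧ M.EqD (List.replicate i a) (List.replicate j a) := by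
  let S : Setoid Q := Setoid.ker M.actA
  have hS : ∀ q q', (Quotient.mk S q = Quotient.mk S q') ↔ M.actA q = M.actA q' :=
    fun q q' => Quotient.eq
  have hD : ∀ u v, M.DM'mk u = M.DM'mk v ↔ M.EqD u v := fun u v => Con.eq _
  obtain ⟨L, L', hne, hL⟩ := exists_same_level (F := F) M a M.DM'mk (Quotient.mk S) (fun L => m + L)
    (fun u v huv q => by
      rw [hD] at huv
      refine ⟨(hD _ _).2 (huv.actW hinv [q]), (hS _ _).2 (funext (huv [q]))⟩)
    (fun L => by simpa only [hD] using hF L)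
  have key : ∀ l l' : List Q, l.map (Quotient.mk S) = l'.map (Quotient.mk S) →
      ∀ w, M.actW l w = M.actW l' w := by
    intro l
    induction l with
    | nil =>
      intro l' h w
      cases l' with
      | nil => rfl
      | cons q l' => simp at h
    | cons q l ih =>
      intro l' h w
      cases l' with
      | nil => simp at h
      | cons q' l' =>
        simp only [List.map_cons, List.cons.injEq, hS] at h
        simp only [actW, h.1, ih l' h.2]
  have hE : M.EqD (List.replicate (m + L) a) (List.replicate (m + L') a) :=
    fun s => key _ _ (hL s)
  rcases lt_or_gt_of_ne hne with hlt | hlt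
  · exact ⟨_, _, by omega, hE⟩
  · exact ⟨_, _, by omega, hE.symm⟩

/-- When `a` has infinite order, not every continuation of a word is a mate of every other one. -/
theorem mates_lt_degree [Finite Q] [Fintype A] {M : Mealy Q A} (hinv : M.Invertible) {a : A}
    (ha : ∀ i j, i ≠ j → ∃ s, M.stW s (List.replicate i a) ≠ M.stW s (List.replicate j a))
    {N d I n k : ℕ} (hd : ∀ v ∈ M.Lan a, N ≤ v.length → (M.ext a v 1).ncard = d) (hNI : N ≤ I)
    (hkd : k ≤ d)
    (hk : ∀ w p c : List A, w ++ p ++ c ∈ M.Lan a →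
      p.length = 1 → I ≤ w.length → n ≤ c.length → (M.mates a w p c).ncard = k) : k < d := by
  refine lt_of_le_of_ne hkd fun hkd => ?_
  subst hkd
  suffices H : ∃ i j, i < j ∧ M.EqD (List.replicate i a) (List.replicate j a) by
    obtain ⟨i, j, hij, h⟩ := H
    obtain ⟨i, j, hij, h⟩ := exists_stW_eq_of_eqD hij h
    obtain ⟨s, hs⟩ := ha i j hij
    exact hs (h s)
  refine exists_eqD_of_bounded (F := Short A I × Short A n) hinv (I + n) fun L => ?_
  have he : ∀ w, ∃ e : List A, w ∈ M.Lan a → e.length = L ∧ w ++ e ∈ M.Lan a := fun w => by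
    by_cases hw : w ∈ M.Lan a
    · obtain ⟨e, h⟩ := exists_ext hinv hw L
      exact ⟨e, fun _ => h⟩
    · exact ⟨[], fun h => absurd h hw⟩
  choose e he using he
  -- The prefix of length `I` and a suffix of length `n` suffice to represent every class.
  have hcode : ∀ v, ∃ f : Short A I × Short A n, v ∈ M.Lan a → v.length = I + n + L →
      M.EqD (f.1.1 ++ e f.1.1 ++ f.2.1) v := by
    intro v
    by_cases hv : v ∈ M.Lan a ∧ v.length = I + n + L
    · obtain ⟨hv, hl⟩ := hv
      obtain ⟨w, p, c, rfl, hw, hp, hc⟩ : ∃ w p c, v = w ++ p ++ c ∧ w.length = I ∧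
          p.length = L ∧ c.length = n :=
        ⟨v.take I, (v.drop I).take L, (v.drop I).drop L, by simp, by simp; omega,
          by simp; omega, by simp; omega⟩
      have hwL := (append_mem_Lan (append_mem_Lan hv).1).1
      have hfull : M.mates a w p c = M.ext a w p.length := by
        refine Set.eq_of_subset_of_ncard_le (mates_subset_ext ..) ?_ (ext_finite ..)
        rw [ncard_ext hd _ hwL (by omega), ncard_mates hk hv hw.ge hc.ge]
      have : e w ∈ M.mates a w p c := by
        rw [hfull, hp]
        exact he w hwL
      obtain ⟨-, c', hc', h⟩ := this
      exact ⟨(⟨w, hw.le⟩, ⟨c', by omega⟩), fun _ _ => h.1⟩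
    · exact ⟨(⟨[], by simp⟩, ⟨[], by simp⟩), fun h h' => absurd ⟨h, h'⟩ hv⟩
  choose code hcode using hcode
  refine ⟨code, fun u hu v hv hul hvl huv => ?_⟩
  have h1 := hcode u hu hul
  rw [huv] at h1
  exact h1.symm.trans (hcode v hv hvl)

end Mealy

namespace Mealy

variable {Q A : Type*}

/-! ### Construction of the free pair -/

/-- There is a word `w` of length `I` to which one can return from wherever one can go: a word
for which the set of reachable words of length `I` is as small as possible. -/
theorem exists_recurrent [Finite A] {M : Mealy Q A} {a : A} {N d I : ℕ}
    (hd : ∀ v ∈ M.Lan a, N ≤ v.length → (M.ext a v 1).ncard = d) (hNI : N ≤ I) :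
    ∃ w ∈ M.Lan a, w.length = I ∧ ∀ z y v, w ++ z ∈ M.Lan a → w ++ z = y ++ v → v.length = I →
      ∃ g y', v ++ g ∈ M.Lan a ∧ v ++ g = y' ++ w := by
  let R : List A → Set (List A) := fun w =>
    {v | v.length = I ∧ ∃ z y, w ++ z ∈ M.Lan a ∧ w ++ z = y ++ v}
  have hfin : ∀ w, (R w).Finite := fun w => finite_of_length fun _ h => h.1
  obtain ⟨w, ⟨hw, hwI⟩, hmin⟩ := (measure fun w => (R w).ncard).wf.has_min
    {w | w ∈ M.Lan a ∧ w.length = I} ⟨_, replicate_mem_Lan M a I, by simp⟩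
  refine ⟨w, hw, hwI, fun z y v hz hzy hv => ?_⟩
  have hvL : v ∈ M.Lan a := (append_mem_Lan (hzy ▸ hz)).2
  have hsub : R v ⊆ R w := by
    rintro x ⟨hx, z', y', hz', hzy'⟩
    refine ⟨hx, z ++ z', y ++ y', ?_, ?_⟩
    · rw [← List.append_assoc, hzy]
      exact append_mem_Lan_of_suffix hd (by omega) (hzy ▸ hz) hz'
    · rw [← List.append_assoc, hzy, List.append_assoc, hzy', List.append_assoc]
  have heq : R v = R w := Set.eq_of_subset_of_ncard_le hsub
    (not_lt.1 (hmin v ⟨hvL, hv⟩)) (hfin w)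
  have hww : w ∈ R w := ⟨hwI, [], [], by simpa using hw, by simp⟩
  rw [← heq] at hww
  exact hww.2

theorem exists_mul_pow_lt {k d : ℕ} (hk : 0 < k) (hkd : k < d) (C : ℕ) :
    ∃ L, C * k ^ L < d ^ L := by
  have hk' : (0 : ℝ) < k := by exact_mod_cast hk
  obtain ⟨L, hL⟩ := pow_unbounded_of_one_lt (C : ℝ)
    ((one_lt_div hk').2 (by exact_mod_cast hkd : (k : ℝ) < d))
  refine ⟨L, ?_⟩
  rw [div_pow, lt_div_iff₀ (by positivity)] at hL
  exact_mod_cast hL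

/-- The word obtained by substituting `p` for `true` and `q` for `false`. -/
def subst (p q : List A) (l : List Bool) : List A := (l.map fun b => bif b then p else q).flatten

theorem subst_append (p q : List A) (l l' : List Bool) :
    subst p q (l ++ l') = subst p q l ++ subst p q l' := by simp [subst]

theorem subst_cons (p q : List A) (b : Bool) (l : List Bool) :
    subst p q (b :: l) = (bif b then p else q) ++ subst p q l := by simp [subst]

theorem length_subst {p q : List A} (h : p.length = q.length) (l : List Bool) :
    (subst p q l).length = l.length * p.length := by
  induction l with
  | nil => simp [subst]
  | cons b l ih => cases b <;> simp [subst_cons, ih, h] <;> ring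

/-- Two words of the same length that are never mates, completed to loops around a recurrent word.
The hypothesis `ha` says that `a` has infinite order for `~A`. -/
theorem exists_loops [Finite Q] [Fintype A] {M : Mealy Q A} (hinv : M.Invertible) {a : A}
    (ha : ∀ i j, i ≠ j → ∃ s, M.stW s (List.replicate i a) ≠ M.stW s (List.replicate j a)) :
    ∃ p q : List A, ∀ l l' : List Bool, l.length = l'.length →
      M.EqD (subst p q l) (subst p q l') → l = l' := by
  classical
  obtain ⟨N, d, hdpos, hd⟩ := exists_degree hinv a
  obtain ⟨I, n, k, hNI, hk0, hkd, hk⟩ := exists_mates_const hinv hd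
  have hlt : k < d := mates_lt_degree hinv ha hd hNI hkd hk
  obtain ⟨w, hw, hwI, hrec⟩ := exists_recurrent hd hNI
  obtain ⟨L, hL⟩ := exists_mul_pow_lt hk0 hlt
    (Fintype.card A ^ I * Fintype.card A ^ n)
  have fI : {l : List A | l.length = I}.Finite := List.finite_length_eq A I
  have fn : {l : List A | l.length = n}.Finite := List.finite_length_eq A n
  -- Many continuations of `w` of length `L` lead to the same word `v`.
  obtain ⟨v, hv, hcard⟩ := Finset.exists_lt_card_fiber_of_mul_lt_card_of_maps_to
    (s := (ext_finite M a w L).toFinset) (t := fI.toFinset)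
    (f := fun z => (w ++ z).drop L) (n := Fintype.card A ^ n * k ^ L)
    (fun z hz => by
      have h1 : z.length = L := ((Set.Finite.mem_toFinset _).1 hz).1
      simp [h1, hwI])
    (by
      rw [← Set.ncard_eq_toFinset_card _ fI, ← Set.ncard_eq_toFinset_card _ (ext_finite M a w L),
        ncard_ext hd L hw (by omega)]
      refine lt_of_le_of_lt ?_ hL
      rw [mul_assoc]
      exact Nat.mul_le_mul_right _ (ncard_le_of_length fun z hz => hz))
  have hvI : v.length = I := by simpa using hv
  have hfib : ∀ z, z ∈ Finset.filter (fun z => (w ++ z).drop L = v)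
      (ext_finite M a w L).toFinset →
      z.length = L ∧ w ++ z ∈ M.Lan a ∧ ∃ y, w ++ z = y ++ v := by
    intro z hz
    rw [Finset.mem_filter, Set.Finite.mem_toFinset] at hz
    exact ⟨hz.1.1, hz.1.2, (w ++ z).take L, by
      conv_lhs => rw [← List.take_append_drop L (w ++ z), hz.2]⟩
  obtain ⟨p, hp⟩ := Finset.card_pos.1 (lt_of_le_of_lt (Nat.zero_le _) hcard)
  obtain ⟨hpL, hwp, yp, hyp⟩ := hfib p hp
  -- The words which are mates of `p` before some continuation of length `n`.
  let bad : Finset (List A) := (fn.toFinset.filter fun c => w ++ p ++ c ∈ M.Lan a).biUnion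
    fun c => (mates_finite M a w p c).toFinset
  have hbad : bad.card ≤ Fintype.card A ^ n * k ^ L := by
    refine (Finset.card_biUnion_le_card_mul _ _ (k ^ L) ?_).trans
      (Nat.mul_le_mul_right _ ?_)
    · intro c hc
      rw [Finset.mem_filter, Set.Finite.mem_toFinset] at hc
      rw [← Set.ncard_eq_toFinset_card _ (mates_finite M a w p c), ncard_mates hk hc.2 hwI.ge (Nat.le_of_eq hc.1.symm), hpL]
    · refine (Finset.card_filter_le _ _).trans ?_
      rw [← Set.ncard_eq_toFinset_card _ fn]
      exact ncard_le_of_length fun z hz => hz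
  obtain ⟨q, hq, hqbad⟩ := Finset.exists_mem_notMem_of_card_lt_card (lt_of_le_of_lt hbad hcard)
  obtain ⟨hqL, hwq, yq, hyq⟩ := hfib q hq
  obtain ⟨g, y', hg, hgy⟩ := hrec p yp v hwp hyp hvI
  have hloop : ∀ b : Bool, ∃ y, w ++ (bif b then p ++ g else q ++ g) = y ++ w ∧
      y ++ w ∈ M.Lan a := by
    have aux : ∀ x y, w ++ x ∈ M.Lan a → w ++ x = y ++ v → w ++ (x ++ g) = y ++ y' ++ w ∧
        y ++ y' ++ w ∈ M.Lan a := by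
      intro x y hx hxy
      have h1 : w ++ (x ++ g) = y ++ y' ++ w := by
        rw [← List.append_assoc, hxy, List.append_assoc, hgy, List.append_assoc]
      refine ⟨h1, ?_⟩
      rw [List.append_assoc, ← hgy, ← List.append_assoc]
      exact append_mem_Lan_of_suffix hd (by omega) (hxy ▸ hx) hg
    intro b
    cases b
    · exact ⟨_, aux q yq hwq hyq⟩
    · exact ⟨_, aux p yp hwp hyp⟩
  have hloops : ∀ l, ∃ y, w ++ subst (p ++ g) (q ++ g) l = y ++ w ∧ y ++ w ∈ M.Lan a := by
    intro l
    induction l with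
    | nil => exact ⟨[], by simp [subst], by simpa using hw⟩
    | cons b l ih =>
      obtain ⟨y1, h1, h2⟩ := hloop b
      obtain ⟨y2, h3, h4⟩ := ih
      refine ⟨y1 ++ y2, ?_, ?_⟩
      · rw [subst_cons, ← List.append_assoc, h1, List.append_assoc, h3, List.append_assoc]
      · rw [List.append_assoc, ← h3, ← List.append_assoc]
        exact append_mem_Lan_of_suffix hd (by omega) h2 (h3 ▸ h4)
  have hcont : ∀ l z, w ++ subst (p ++ g) (q ++ g) l ++ z ∈ M.Lan a ↔ w ++ z ∈ M.Lan a := by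
    intro l z
    obtain ⟨y, h1, h2⟩ := hloops l
    rw [h1]
    exact ⟨fun h => (append_mem_Lan (u := y) (by simpa using h)).2,
      fun h => append_mem_Lan_of_suffix hd (by omega) h2 h⟩
  have hpq : (p ++ g).length = (q ++ g).length := by simp [hpL, hqL]
  have hcollide : ∀ W r r' : List Bool, r.length = r'.length →
      ¬ M.EqD (subst (p ++ g) (q ++ g) (W ++ true :: r))
        (subst (p ++ g) (q ++ g) (W ++ false :: r')) := by
    intro W r r' hr hE
    have hS : M.Sim a (w ++ subst (p ++ g) (q ++ g) (W ++ false :: r'))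
        (w ++ subst (p ++ g) (q ++ g) (W ++ true :: r)) := by
      refine ⟨hE.symm.append_left w, ?_, fun z => by rw [hcont, hcont]⟩
      have := (hcont (W ++ true :: r) []).2 (by simpa using hw)
      simpa using this
    obtain ⟨y, hy, hyL⟩ := hloops W
    simp only [subst_append, subst_cons, cond_true, cond_false, ← List.append_assoc, hy] at hS
    simp only [List.append_assoc] at hS
    have hmem : q ∈ M.mates a (y ++ w) p (g ++ subst (p ++ g) (q ++ g) r) :=
      ⟨by omega, g ++ subst (p ++ g) (q ++ g) r', by
        simp only [List.length_append, length_subst hpq, hr], by simpa using hS⟩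
    generalize g ++ subst (p ++ g) (q ++ g) r = c at hmem
    obtain ⟨e, he, hce⟩ := exists_ext hinv (hmem.2.choose_spec.2.2.1) n
    have hmem2 := mates_subset_right (by simpa using hce) hmem
    obtain ⟨c₀, e', hc₀, hc₀n⟩ : ∃ c₀ e', c ++ e = c₀ ++ e' ∧ c₀.length = n :=
      ⟨(c ++ e).take n, (c ++ e).drop n, (List.take_append_drop ..).symm, by simp [he]⟩
    have hce' : y ++ w ++ p ++ (c₀ ++ e') ∈ M.Lan a := by
      rw [← hc₀, ← List.append_assoc]; exact hce
    have hce₀ : y ++ w ++ p ++ c₀ ∈ M.Lan a :=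
      (append_mem_Lan (z := e') (by simpa using hce')).1
    have hwc₀ : w ++ p ++ c₀ ∈ M.Lan a := (append_mem_Lan (u := y) (by simpa using hce₀)).2
    rw [hc₀] at hmem2
    -- Lengthening the past and the future adds no mates.
    have hsub : M.mates a w p c₀ ⊆ M.mates a (y ++ w) p (c₀ ++ e') :=
      (mates_subset_left hd (by omega) hce₀).trans (mates_subset_right hce')
    have heq := Set.eq_of_subset_of_ncard_le hsub (by
      rw [ncard_mates hk hwc₀ hwI.ge hc₀n.ge,
        ncard_mates hk hce' (by simp; omega) (by simp; omega)]) (mates_finite ..)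
    rw [← heq] at hmem2
    apply hqbad
    simp only [bad, Finset.mem_biUnion, Finset.mem_filter, Set.Finite.mem_toFinset]
    exact ⟨c₀, ⟨hc₀n, hwc₀⟩, hmem2⟩
  refine ⟨p ++ g, q ++ g, ?_⟩
  suffices H : ∀ l l' W : List Bool, l.length = l'.length →
      M.EqD (subst (p ++ g) (q ++ g) (W ++ l)) (subst (p ++ g) (q ++ g) (W ++ l')) → l = l' from
    fun l l' hl h => H l l' [] hl h
  intro l
  induction l with
  | nil => exact fun l' W hl _ => (List.length_eq_zero_iff.1 hl.symm).symm
  | cons b l ih =>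
    rintro (_ | ⟨b', l'⟩) W hl hE
    · simp at hl
    · have hl' : l.length = l'.length := by simpa using hl
      have hb : b = b' := by
        cases b <;> cases b'
        · rfl
        · exact absurd hE.symm (hcollide W l' l hl'.symm)
        · exact absurd hE (hcollide W l l' hl')
        · rfl
      subst hb
      rw [ih l' (W ++ [b]) hl' (by simpa using hE)]

/-- Words of different lengths are separated as well: if `l` and `l'` give `~D`-equivalent words then
so do `l b l'` and `l' b l`, for both letters `b`. -/
theorem exists_free_words [Finite Q] [Fintype A] {M : Mealy Q A} (hinv : M.Invertible) {a : A}
    (ha : ∀ i j, i ≠ j → ∃ s, M.stW s (List.replicate i a) ≠ M.stW s (List.replicate j a)) :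
    ∃ p q : List A, ∀ l l' : List Bool, M.EqD (subst p q l) (subst p q l') → l = l' := by
  obtain ⟨p, q, hpq⟩ := exists_loops hinv ha
  have hswap : ∀ l l' : List Bool, M.EqD (subst p q l) (subst p q l') →
      ∀ b, l ++ b :: l' = l' ++ b :: l := by
    intro l l' h b
    refine hpq _ _ (by simp; omega) ?_
    rw [subst_append, subst_append, subst_cons, subst_cons]
    exact (h.append_right _).trans ((h.symm.append_left _).append_left _)
  have hlen : ∀ l l' : List Bool, M.EqD (subst p q l) (subst p q l') →
      ¬ l.length < l'.length := by
    intro l l' h hlt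
    have key : ∀ b, l'[l.length]? = some b := fun b => by
      have := congrArg (fun x : List Bool => x[l.length]?) (hswap l l' h b)
      simpa [List.getElem?_append_left hlt] using this.symm
    simpa using (key true).symm.trans (key false)
  refine ⟨p, q, fun l l' h => hpq l l' ?_ h⟩
  have h1 := hlen l l' h
  have h2 := hlen l' l h.symm
  omega

end Mealy

namespace Mealy

variable {Q A : Type*}

/-! ### Powers of the alphabet and the theorem -/

/-- The automaton with the same states acting on blocks of `n` letters. -/
def block (M : Mealy Q A) (n : ℕ) : Mealy Q {w : List A // w.length = n} where
  step q b := (⟨M.actA q b.1, by rw [length_actA, b.2]⟩, M.stA q b.1)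

/-- Concatenation of a word of blocks. -/
def unblock {n : ℕ} (U : List {w : List A // w.length = n}) : List A :=
  (U.map Subtype.val).flatten

theorem unblock_cons {n : ℕ} (b : {w : List A // w.length = n})
    (U : List {w : List A // w.length = n}) : unblock (b :: U) = b.1 ++ unblock U := rfl

theorem unblock_append {n : ℕ} (U V : List {w : List A // w.length = n}) :
    unblock (U ++ V) = unblock U ++ unblock V := by simp [unblock]

theorem unblock_injective {n : ℕ} : ∀ U V : List {w : List A // w.length = n},
    U.length = V.length → unblock U = unblock V → U = V
  | [], [], _, _ => rfl
  | [], _ :: _, h, _ => by simp at h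
  | _ :: _, [], h, _ => by simp at h
  | b :: U, c :: V, h, hUV => by
    obtain ⟨h1, h2⟩ := List.append_inj hUV (by rw [b.2, c.2])
    rw [Subtype.ext h1, unblock_injective U V (by simpa using h) h2]

theorem stA_block (M : Mealy Q A) {n : ℕ} (q : Q) (U : List {w : List A // w.length = n}) :
    (M.block n).stA q U = M.stA q (unblock U) := by
  induction U generalizing q with
  | nil => rfl
  | cons b U ih => rw [unblock_cons, stA_append, ← ih]; rfl

theorem unblock_actA (M : Mealy Q A) {n : ℕ} (q : Q) (U : List {w : List A // w.length = n}) :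
    unblock ((M.block n).actA q U) = M.actA q (unblock U) := by
  induction U generalizing q with
  | nil => rfl
  | cons b U ih => rw [unblock_cons, actA_append, ← ih]; rfl

theorem unblock_actW (M : Mealy Q A) {n : ℕ} (s : List Q) (U : List {w : List A // w.length = n}) :
    unblock ((M.block n).actW s U) = M.actW s (unblock U) := by
  induction s with
  | nil => rfl
  | cons q s ih => rw [actW, unblock_actA, ih]; rfl

theorem stW_block (M : Mealy Q A) {n : ℕ} (s : List Q) (U : List {w : List A // w.length = n}) :
    (M.block n).stW s U = M.stW s (unblock U) := by
  induction s with
  | nil => rfl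
  | cons q s ih => rw [stW, stA_block, unblock_actW, ih]; rfl

theorem block_invertible [Finite A] {M : Mealy Q A} (hinv : M.Invertible) (n : ℕ) :
    (M.block n).Invertible := by
  intro q
  have : Finite {w : List A // w.length = n} := List.finite_length_eq A n
  refine Finite.injective_iff_bijective.1 fun b c h => Subtype.ext ?_
  exact actA_injective hinv q (congrArg Subtype.val h)

theorem eqD_block {M : Mealy Q A} {n : ℕ} {U V : List {w : List A // w.length = n}}
    (h : M.EqD (unblock U) (unblock V)) : (M.block n).EqD U V := by
  intro s W
  refine unblock_injective _ _ (by simp only [length_actW]) ?_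
  rw [unblock_actW, unblock_actW, stW_block, stW_block]
  exact h s _

theorem unblock_replicate {n : ℕ} (b : {w : List A // w.length = n}) (i : ℕ) (M : Mealy Q A) :
    M.DMmk (unblock (List.replicate i b)) = M.DMmk b.1 ^ i := by
  induction i with
  | zero => rfl
  | succ i ih => rw [List.replicate_succ, unblock_cons, pow_succ', ← ih]; rfl

theorem evalPair_unblock {n : ℕ} (M : Mealy Q A) (p q : List {w : List A // w.length = n})
    (l : List Bool) :
    evalPair (M.DM'mk (unblock p)) (M.DM'mk (unblock q)) l = M.DM'mk (unblock (subst p q l)) := by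
  induction l with
  | nil => rfl
  | cons b l ih => rw [evalPair, ih, subst_cons, unblock_append]; cases b <;> rfl

end Mealy

theorem evalPair_replicate {S : Type*} [Monoid S] (y z : S) (n : ℕ) :
    evalPair y z (List.replicate n true) = y ^ n := by
  induction n with
  | zero => simp [evalPair]
  | succ n ih => rw [List.replicate_succ, evalPair, ih, pow_succ']; rfl

theorem InfiniteOrder.pow_injective {S : Type*} [Monoid S] {x : S} (hx : InfiniteOrder x) :
    Function.Injective fun n : ℕ => x ^ n := by
  refine .of_lt_imp_ne fun i j hij (h : x ^ i = x ^ j) => hx ?_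
  have key : ∀ n, ∃ m < j, x ^ m = x ^ n := by
    intro n
    induction n using Nat.strong_induction_on with
    | _ n ih =>
      by_cases hn : n < j
      · exact ⟨n, hn, rfl⟩
      · obtain ⟨m, hm, he⟩ := ih (i + (n - j)) (by omega)
        refine ⟨m, hm, ?_⟩
        rw [he, pow_add, h, ← pow_add]
        congr 1
        omega
  refine ((Set.finite_lt_nat j).image fun m => x ^ m).subset ?_
  rintro _ ⟨n, rfl⟩
  exact key (n + 1)

/-- For an invertible Mealy automaton `M`, there exist `y, z ∈ D'_M` freely
generating a free subsemigroup of rank two iff there exists `x ∈ D_M` of infinite order. -/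
theorem stmt3 {Q A : Type*} [Fintype Q] [Nonempty Q] [Fintype A] [Nonempty A]
    (M : Mealy Q A) (hinv : M.Invertible) :
    (∃ y z : M.DM', IsFreePair y z) ↔ (∃ x : M.DM, InfiniteOrder x) := by
  constructor
  · rintro ⟨y, z, hyz⟩
    obtain ⟨u, rfl⟩ := Con.mk'_surjective y
    -- `~A` refines `~D`, so `D'_M` is a quotient of `D_M`.
    have hle : M.conA ≤ M.conD := fun u v h s w => by rw [h s]
    let f : M.DM →* M.DM' := M.conA.map M.conD hle
    refine ⟨M.conA.mk' u, Set.infinite_range_of_injective fun i j hij => ?_⟩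
    have h : (M.conD.mk' u) ^ (i + 1) = (M.conD.mk' u) ^ (j + 1) := by
      have h1 : f (M.conA.mk' u ^ (i + 1)) = f (M.conA.mk' u ^ (j + 1)) := congrArg f hij
      rwa [map_pow, map_pow] at h1
    rw [← evalPair_replicate _ z, ← evalPair_replicate _ z] at h
    simpa using congrArg List.length (hyz _ _ (by simp) (by simp) h)
  · rintro ⟨x, hx⟩
    obtain ⟨u, rfl⟩ := Con.mk'_surjective x
    have hpow := hx.pow_injective
    let b : {w : List A // w.length = u.toList.length} := ⟨u.toList, rfl⟩
    have : Finite {w : List A // w.length = u.toList.length} := List.finite_length_eq A _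
    have := Fintype.ofFinite {w : List A // w.length = u.toList.length}
    obtain ⟨p, q, hpq⟩ := Mealy.exists_free_words (Mealy.block_invertible hinv u.toList.length)
      (a := b) (fun i j hij => by
        by_contra! h
        refine hij (hpow ?_)
        have h1 : M.DMmk (Mealy.unblock (List.replicate i b)) =
            M.DMmk (Mealy.unblock (List.replicate j b)) := (Con.eq _).2 fun s => by
          have := h s
          rwa [Mealy.stW_block, Mealy.stW_block] at this
        rwa [Mealy.unblock_replicate, Mealy.unblock_replicate] at h1)
    refine ⟨M.DM'mk (Mealy.unblock p), M.DM'mk (Mealy.unblock q), fun l₁ l₂ _ _ h => hpq _ _ ?_⟩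
    rw [Mealy.evalPair_unblock, Mealy.evalPair_unblock] at h
    exact Mealy.eqD_block ((Con.eq _).1 h)

end AutGrp
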